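/- Let P be a reversible Markov matrix (in the closure of reversible matrices with positive stationary distribution) on a state space of size N ≥ 2 with absolute spectral gap 1 - β_⋆ > 0 (eigenvalues may be negative). Then for every 0 < ε < 1, t_mix(ε) ≤ 2(N + 2 log(1/ε) - 1 + sqrt(2(N-2) log(1/ε))) · t_rel. -/

import Mathlib

/-- The closure of the set of Markov matrices reversible with respect to a strictly
positive stationary distribution. -/
def RevClosure (N : ℕ) : Set (Matrix (Fin N) (Fin N) ℝ) :=
  closure {M | (∀ i j, 0 ≤ M i j) ∧ (∀ i, ∑ j, M i j = 1) ∧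
    ∃ p : Fin N → ℝ, (∀ i, 0 < p i) ∧ (∑ i, p i = 1) ∧
      ∀ i j, p i * M i j = p j * M j i}

/-!
All eigenvalues of `M = P ^ 2` are nonnegative, and all but the simple eigenvalue `1` are at most
`βs`. Order them decreasingly as `lam 0 = 1, lam 1, …, lam n`. By the Micchelli–Willoughby theorem
the products `G m = (M - lam m) * ⋯ * (M - lam n)` are entrywise nonnegative. For a symmetric `M`
this comes from the expansion of the adjugate of `X - M` in Newton's basis at the nodes `lam k`:
the `G m` are its coefficients, and since the eigenvalues of principal submatrices interlace, the
entries of the adjugate lie in the cone spanned by that basis. The property is invariant under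
positive diagonal conjugation and closed, hence holds for limits of reversible matrices.

Normalised, the relation `M * G (m + 1) = G m + lam m • G (m + 1)` is the recursion of a pure death
chain on `0, …, n` which leaves `k` with probability `1 - lam k`, with `G 1` proportional to the
equilibrium. Consequently the separation distance of `M ^ t` from equilibrium is at most the
probability that the death chain started at `n` has not reached `0` by time `t`. As each step has
probability at least `1 - βs`, a Chernoff bound for binomial lower tails finishes the proof.
-/

section Interlacing

open Module RCLike InnerProductSpace

variable {𝕜 E F : Type*} [RCLike 𝕜] [NormedAddCommGroup E] [InnerProductSpace 𝕜 E]
  [NormedAddCommGroup F] [InnerProductSpace 𝕜 F] [FiniteDimensional 𝕜 E] [FiniteDimensional 𝕜 F]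
  {n m : ℕ}

lemma re_inner_apply_self_eq_sum_eigenvalues {T : E →ₗ[𝕜] E} (hT : T.IsSymmetric)
    (hn : finrank 𝕜 E = n) (x : E) :
    re ⟪T x, x⟫_𝕜 = ∑ j, hT.eigenvalues hn j * ‖(hT.eigenvectorBasis hn).repr x j‖ ^ 2 := by
  rw [← (hT.eigenvectorBasis hn).repr.inner_map_map (T x), PiLp.inner_apply, map_sum]
  refine Finset.sum_congr rfl fun j _ ↦ ?_
  rw [hT.eigenvectorBasis_apply_self_apply, inner_apply, (starRingEnd 𝕜).map_mul, conj_ofReal,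
    mul_left_comm, mul_conj, re_ofReal_mul, ← ofReal_pow, ofReal_re]

lemma le_eigenvalues_of_forall_le_re_inner {T : E →ₗ[𝕜] E} (hT : T.IsSymmetric)
    (hn : finrank 𝕜 E = n) {W : Submodule 𝕜 E} {i : Fin n} (hW : (i : ℕ) < finrank 𝕜 W) {c : ℝ}
    (hc : ∀ x ∈ W, c * ‖x‖ ^ 2 ≤ re ⟪T x, x⟫_𝕜) : c ≤ hT.eigenvalues hn i := by
  let b := hT.eigenvectorBasis hn
  let firstCoords : W →ₗ[𝕜] (Fin i → 𝕜) :=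
    LinearMap.pi (fun j ↦ b.toBasis.coord (j.castLE i.2.le)) ∘ₗ W.subtype
  obtain ⟨x, hx, hx0⟩ := Submodule.exists_mem_ne_zero_of_ne_bot
    (firstCoords.ker_ne_bot_of_finrank_lt (by simpa using hW))
  have hcoord (j : Fin n) (hj : j < i) : b.repr (x : E) j = 0 :=
    congrFun (LinearMap.mem_ker.1 hx) ⟨j, hj⟩
  have hle : re ⟪T x, (x : E)⟫_𝕜 ≤ hT.eigenvalues hn i * ‖(x : E)‖ ^ 2 := by
    rw [re_inner_apply_self_eq_sum_eigenvalues hT hn, ← b.repr.norm_map x,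
      EuclideanSpace.norm_sq_eq, Finset.mul_sum]
    refine Finset.sum_le_sum fun j _ ↦ ?_
    rcases lt_or_ge j i with hj | hj
    · simp [b, hcoord j hj]
    · exact mul_le_mul_of_nonneg_right (hT.eigenvalues_antitone hn hj) (sq_nonneg _)
  exact le_of_mul_le_mul_right ((hc x x.2).trans hle) (by
    have : (x : E) ≠ 0 := by simpa using hx0
    positivity)

lemma eigenvalues_mul_norm_sq_le_re_inner {T : E →ₗ[𝕜] E} (hT : T.IsSymmetric)
    (hn : finrank 𝕜 E = n) {i : Fin n} {x : E}
    (hx : x ∈ Submodule.span 𝕜 (hT.eigenvectorBasis hn '' Set.Iic i)) :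
    hT.eigenvalues hn i * ‖x‖ ^ 2 ≤ re ⟪T x, x⟫_𝕜 := by
  let b := hT.eigenvectorBasis hn
  rw [re_inner_apply_self_eq_sum_eigenvalues hT hn, ← b.repr.norm_map x,
    EuclideanSpace.norm_sq_eq, Finset.mul_sum]
  refine Finset.sum_le_sum fun j _ ↦ ?_
  rcases le_or_gt j i with hj | hj
  · exact mul_le_mul_of_nonneg_right (hT.eigenvalues_antitone hn hj) (sq_nonneg _)
  · have hsupp := b.toBasis.mem_span_image.1 (by simpa [b] using hx)
    have : b.repr x j = 0 := by
      by_contra h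
      exact (hsupp (Finsupp.mem_support_iff.2 h)).not_gt hj
    simp [b, this]

lemma eigenvalues_le_of_compression {T : E →ₗ[𝕜] E} (hT : T.IsSymmetric) (hn : finrank 𝕜 E = n)
    {S : F →ₗ[𝕜] F} (hS : S.IsSymmetric) (hm : finrank 𝕜 F = m) (V : F →ₗᵢ[𝕜] E)
    (hV : ∀ x, ⟪S x, x⟫_𝕜 = ⟪T (V x), V x⟫_𝕜) {i : Fin m} {j : Fin n} (hij : (i : ℕ) = j) :
    hS.eigenvalues hm i ≤ hT.eigenvalues hn j := by
  let b := hS.eigenvectorBasis hm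
  let W := Submodule.span 𝕜 (b '' Set.Iic i)
  have hW : finrank 𝕜 (W.map V.toLinearMap) = i + 1 := by
    rw [← (Submodule.equivMapOfInjective V.toLinearMap V.injective W).finrank_eq]
    have := (finrank_span_eq_card (R := 𝕜)
      (b.orthonormal.linearIndependent.comp (Subtype.val : Set.Iic i → _)
        Subtype.val_injective))
    rw [Set.range_comp, Subtype.range_coe] at this
    exact this.trans (by rw [← Set.toFinset_card]; simp)
  refine le_eigenvalues_of_forall_le_re_inner hT hn (W := W.map V.toLinearMap) (by omega) ?_
  rintro _ ⟨x, hx, rfl⟩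
  simpa [hV] using eigenvalues_mul_norm_sq_le_re_inner hS hm hx

end Interlacing

section SortedEigenvalues

open Matrix Polynomial

variable {𝕜 ι κ : Type*} [RCLike 𝕜] [Fintype ι] [DecidableEq ι] [Fintype κ] [DecidableEq κ]

/-- The eigenvalues of a Hermitian matrix in decreasing order. They are indexed by `ℕ`, with junk
value `0` from the size of the matrix on, so that the eigenvalues of matrices of different sizes
can be compared. -/
noncomputable def sortedEigenvalues {A : Matrix ι ι 𝕜} (hA : A.IsHermitian) (k : ℕ) : ℝ :=
  if h : k < Fintype.card ι then hA.eigenvalues₀ ⟨k, h⟩ else 0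

lemma sortedEigenvalues_antitoneOn {A : Matrix ι ι 𝕜} (hA : A.IsHermitian) :
    AntitoneOn (sortedEigenvalues hA) (Set.Iio (Fintype.card ι)) := by
  intro i hi j hj hij
  rw [Set.mem_Iio] at hi hj
  simpa only [sortedEigenvalues, hi, hj, dif_pos] using
    hA.eigenvalues₀_antitone (Fin.mk_le_mk.2 hij)

lemma charpoly_eq_nodal_sortedEigenvalues {A : Matrix ι ι 𝕜} (hA : A.IsHermitian) :
    A.charpoly =
      Lagrange.nodal (Finset.range (Fintype.card ι)) fun k ↦ (sortedEigenvalues hA k : 𝕜) := by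
  rw [hA.charpoly_eq, Lagrange.nodal_eq, Finset.prod_range]
  refine Fintype.prod_equiv (Fintype.equivOfCardEq (Fintype.card_fin _)).symm _ _ fun i ↦ ?_
  simp [sortedEigenvalues, IsHermitian.eigenvalues]

lemma sortedEigenvalues_submatrix_le {A : Matrix ι ι 𝕜} (hA : A.IsHermitian)
    {f : κ → ι} (hf : Function.Injective f) {k : ℕ} (hk : k < Fintype.card κ) :
    sortedEigenvalues (hA.submatrix f) k ≤ sortedEigenvalues hA k := by
  have hk' := hk.trans_le (Fintype.card_le_of_injective f hf)
  let J : Matrix ι κ 𝕜 := (1 : Matrix ι ι 𝕜).submatrix id f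
  have hJ (B : Matrix ι ι 𝕜) : Jᴴ * B * J = B.submatrix f f := by
    ext i j
    simp [J, mul_apply, one_apply]
  have hinner (B : Matrix ι ι 𝕜) (x y : EuclideanSpace 𝕜 κ) :
      inner 𝕜 (toEuclideanLin B (toEuclideanLin J x)) (toEuclideanLin J y) =
        inner 𝕜 (toEuclideanLin (B.submatrix f f) x) y := by
    rw [← LinearMap.adjoint_inner_left, ← toEuclideanLin_conjTranspose_eq_adjoint, ← hJ]
    simp
  let V : EuclideanSpace 𝕜 κ →ₗᵢ[𝕜] EuclideanSpace 𝕜 ι :=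
    (toEuclideanLin J).isometryOfInner fun x y ↦ by
      simpa [submatrix_one _ hf] using hinner 1 x y
  simp only [sortedEigenvalues, hk, hk', dif_pos]
  exact eigenvalues_le_of_compression _ _ _ _ V (fun x ↦ (hinner A x x).symm) rfl

end SortedEigenvalues

section NewtonCone

open Polynomial Lagrange Finset

variable {R : Type*} [CommRing R]

lemma nodal_range_succ (lam : ℕ → R) (l : ℕ) :
    nodal (range (l + 1)) lam = nodal (range l) lam * (X - C (lam l)) := by
  rw [nodal_eq, prod_range_succ, nodal_eq]

/-- Newton's basis `1, X - lam 0, (X - lam 0) * (X - lam 1), …` of the polynomials. -/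
noncomputable def newtonBasis [IsDomain R] (lam : ℕ → R) : Module.Basis ℕ R R[X] :=
  Polynomial.Sequence.basis ⟨fun l ↦ nodal (range l) lam, fun l ↦ by simp⟩ fun l ↦
    (show (nodal (range l) lam).Monic from nodal_monic).leadingCoeff ▸ isUnit_one

lemma newtonBasis_apply [IsDomain R] (lam : ℕ → R) (l : ℕ) :
    newtonBasis lam l = nodal (range l) lam := by
  rw [newtonBasis, Polynomial.Sequence.basis_eq_self]

variable [LinearOrder R] [IsStrictOrderedRing R] {lam : ℕ → R} {m n : ℕ} {p : R[X]}

/-- The convex cone generated by the first `m` polynomials of Newton's basis. -/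
noncomputable def newtonCone (lam : ℕ → R) (m : ℕ) : PointedCone R R[X] :=
  PointedCone.hull R (newtonBasis lam '' Set.Iio m)

lemma nodal_mem_newtonCone (lam : ℕ → R) (h : n < m) : nodal (range n) lam ∈ newtonCone lam m :=
  PointedCone.subset_hull ⟨n, h, newtonBasis_apply lam n⟩

lemma newtonCone_mono (lam : ℕ → R) : Monotone (newtonCone lam) := fun _ _ h ↦
  Submodule.span_mono (Set.image_mono (Set.Iio_subset_Iio h))

lemma C_mul_mem_newtonCone (hp : p ∈ newtonCone lam m) {c : R} (hc : 0 ≤ c) :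
    C c * p ∈ newtonCone lam m := by
  simpa [smul_eq_C_mul] using PointedCone.smul_mem _ hc hp

lemma mul_X_sub_C_mem_newtonCone {μ : R} (hμ : ∀ i < m, μ ≤ lam i) (hp : p ∈ newtonCone lam m) :
    p * (X - C μ) ∈ newtonCone lam (m + 1) := by
  induction hp using Submodule.span_induction with
  | mem p hp =>
    obtain ⟨l, hl : l < m, rfl⟩ := hp
    have hsplit : newtonBasis lam l * (X - C μ) =
        nodal (range (l + 1)) lam + C (lam l - μ) * nodal (range l) lam := by
      rw [newtonBasis_apply, nodal_range_succ, C_sub]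
      ring
    rw [hsplit]
    exact add_mem (nodal_mem_newtonCone lam (by omega))
      (C_mul_mem_newtonCone (nodal_mem_newtonCone lam (by omega)) (sub_nonneg.2 (hμ l hl)))
  | zero => simp
  | add p q _ _ hp hq => exact add_mul p q _ ▸ add_mem hp hq
  | smul c p _ hp => exact smul_mul_assoc c p _ ▸ Submodule.smul_mem _ c hp

lemma nodal_mem_newtonCone_of_le {mu : ℕ → R} (h : ∀ i j, i ≤ j → j < m → mu j ≤ lam i) :
    nodal (range m) mu ∈ newtonCone lam (m + 1) := by
  induction m with
  | zero => simpa using nodal_mem_newtonCone lam zero_lt_one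
  | succ m ih =>
    rw [nodal_range_succ]
    exact mul_X_sub_C_mem_newtonCone (fun i hi ↦ h i m (by omega) (by omega))
      (ih fun i j hij hj ↦ h i j hij (by omega))

lemma newtonBasis_repr_nonneg_of_mem_newtonCone (hp : p ∈ newtonCone lam m) :
    0 ≤ (newtonBasis lam).repr p := by
  induction hp using Submodule.span_induction with
  | mem p hp =>
    obtain ⟨l, -, rfl⟩ := hp
    simp
  | zero => simp
  | add p q _ _ hp hq => rw [map_add]; exact add_nonneg hp hq
  | smul c p _ hp =>
    rw [← Nonneg.coe_smul, map_smul]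
    exact fun l ↦ mul_nonneg c.2 (hp l)

lemma nonneg_of_sum_C_mul_nodal_mem_newtonCone {a : ℕ → R}
    (h : ∑ l ∈ range n, C (a l) * nodal (range l) lam ∈ newtonCone lam m) {l : ℕ} (hl : l < n) :
    0 ≤ a l := by
  have hrepr := newtonBasis_repr_nonneg_of_mem_newtonCone h l
  simpa [← smul_eq_C_mul, ← newtonBasis_apply, Finsupp.single_apply, hl] using hrepr

end NewtonCone

section MicchelliWilloughby

open Polynomial Matrix Lagrange Finset

variable {R ι κ : Type*} [CommRing R] [Fintype ι] [DecidableEq ι] [Fintype κ] [DecidableEq κ]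
  {n : ℕ}

lemma charmatrix_submatrix (A : Matrix ι ι R) {f : κ → ι} (hf : Function.Injective f) :
    charmatrix (A.submatrix f f) = (charmatrix A).submatrix f f := by
  ext1 i j
  simp [charmatrix_apply, diagonal_apply, hf.eq_iff]

lemma isRegular_charmatrix (A : Matrix ι ι R) : IsRegular (charmatrix A) :=
  isRegular_of_isLeftRegular_det (charpoly_monic A).isRegular.left

lemma adjugate_charmatrix_self (A : Matrix (Fin (n + 1)) (Fin (n + 1)) R) (p : Fin (n + 1)) :
    adjugate (charmatrix A) p p = (A.submatrix p.succAbove p.succAbove).charpoly := by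
  rw [adjugate_fin_succ_eq_det_submatrix, charpoly,
    charmatrix_submatrix A Fin.succAbove_right_injective, ← two_mul]
  simp

lemma adjugate_charmatrix_succAbove (A : Matrix (Fin (n + 1)) (Fin (n + 1)) R)
    (p : Fin (n + 1)) (q : Fin n) :
    adjugate (charmatrix A) p (p.succAbove q) =
      ∑ k, C (A p (p.succAbove k)) *
        adjugate (charmatrix (A.submatrix p.succAbove p.succAbove)) k q := by
  set B := A.submatrix p.succAbove p.succAbove
  let r : Fin n → R[X] := fun k ↦ adjugate (charmatrix A) p (p.succAbove k)
  let v : Fin n → R[X] := fun k ↦ C (A p (p.succAbove k))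
  have hr : r ᵥ* charmatrix B = B.charpoly • v := by
    ext1 k
    have h := congrFun₂ (adjugate_mul (charmatrix A)) p (p.succAbove k)
    rw [mul_apply, Fin.sum_univ_succAbove _ p, adjugate_charmatrix_self,
      charmatrix_apply_ne _ _ _ (Fin.succAbove_ne p k).symm, Matrix.smul_apply,
      one_apply_ne (Fin.succAbove_ne p k).symm, smul_zero] at h
    rw [charmatrix_submatrix A Fin.succAbove_right_injective]
    change ∑ i, r i * charmatrix A (p.succAbove i) (p.succAbove k) = B.charpoly * v k
    linear_combination h
  have hv : (v ᵥ* adjugate (charmatrix B)) ᵥ* charmatrix B = B.charpoly • v := by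
    rw [vecMul_vecMul, adjugate_mul, charpoly, vecMul_smul, vecMul_one]
  exact congrFun (isRightRegular_iff_vecMul_injective.1 (isRegular_charmatrix B).right
    (hr.trans hv.symm)) q

lemma adjugate_charmatrix_mem_newtonCone {A : Matrix (Fin n) (Fin n) ℝ} (hA : A.IsHermitian)
    (hA0 : ∀ i j, 0 ≤ A i j) {lam : ℕ → ℝ}
    (hlam : ∀ i j, i ≤ j → j < n → sortedEigenvalues hA j ≤ lam i) (p q : Fin n) :
    adjugate (charmatrix A) p q ∈ newtonCone lam n := by
  induction n with
  | zero => exact p.elim0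
  | succ n ih =>
    have hB := hA.submatrix p.succAbove
    have hlamB (i j : ℕ) (hij : i ≤ j) (hj : j < n) : sortedEigenvalues hB j ≤ lam i :=
      (sortedEigenvalues_submatrix_le hA Fin.succAbove_right_injective (by simpa using hj)).trans
        (hlam i j hij (by omega))
    rcases Fin.eq_self_or_eq_succAbove p q with rfl | ⟨q, rfl⟩
    · rw [adjugate_charmatrix_self, charpoly_eq_nodal_sortedEigenvalues hB, Fintype.card_fin]
      exact nodal_mem_newtonCone_of_le hlamB
    · rw [adjugate_charmatrix_succAbove]
      exact sum_mem fun k _ ↦ C_mul_mem_newtonCone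
        (newtonCone_mono lam n.le_succ (ih hB (fun _ _ ↦ hA0 _ _) hlamB k q)) (hA0 _ _)

/-- The product of the matrices `A - lam k` over `l ≤ k < n`. If the `lam k` are the eigenvalues of
`A`, these are, up to an index shift, the coefficients of the adjugate of `X - A` with respect to
Newton's basis. -/
noncomputable def newtonTail (A : Matrix ι ι R) (lam : ℕ → R) (n l : ℕ) : Matrix ι ι R :=
  aeval A (nodal (Ico l n) lam)

variable {A : Matrix ι ι R} {lam : ℕ → R}

lemma newtonTail_self : newtonTail A lam n n = 1 := by
  simp [newtonTail]

lemma newtonTail_zero (h : A.charpoly = nodal (range n) lam) : newtonTail A lam n 0 = 0 := by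
  rw [newtonTail, Nat.Ico_zero_eq_range, ← h, aeval_self_charpoly]

lemma newtonTail_eq_mul_sub {l : ℕ} (hl : l < n) :
    newtonTail A lam n l = A * newtonTail A lam n (l + 1) - lam l • newtonTail A lam n (l + 1) := by
  rw [newtonTail, nodal_eq, prod_eq_prod_Ico_succ_bot hl, map_mul, ← nodal_eq, ← newtonTail]
  simp [sub_mul, Algebra.algebraMap_eq_smul_one]

lemma charmatrix_mul_newtonTail_map_C {l : ℕ} (hl : l < n) :
    charmatrix A * (newtonTail A lam n (l + 1)).map C =
      (X - C (lam l)) • (newtonTail A lam n (l + 1)).map C - (newtonTail A lam n l).map C := by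
  rw [newtonTail_eq_mul_sub hl, charmatrix, sub_mul, RingHom.mapMatrix_apply, ← Matrix.map_mul,
    scalar_apply, ← smul_eq_diagonal_mul]
  ext1 i j
  simp only [Matrix.smul_apply, Matrix.sub_apply, map_apply, smul_eq_mul, C_sub, C_mul]
  ring

lemma adjugate_charmatrix_eq_sum_newtonTail (h : A.charpoly = nodal (range n) lam) :
    adjugate (charmatrix A) =
      ∑ l ∈ range n, nodal (range l) lam • (newtonTail A lam n (l + 1)).map C := by
  refine (isRegular_charmatrix A).left ?_
  let g (l : ℕ) : Matrix ι ι R[X] := nodal (range l) lam • (newtonTail A lam n l).map C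
  have hstep (l : ℕ) (hl : l ∈ range n) :
      charmatrix A * nodal (range l) lam • (newtonTail A lam n (l + 1)).map C =
        g (l + 1) - g l := by
    rw [mul_smul_comm, charmatrix_mul_newtonTail_map_C (mem_range.1 hl), smul_sub, smul_smul,
      ← nodal_range_succ]
  calc charmatrix A * adjugate (charmatrix A) = A.charpoly • 1 := mul_adjugate _
    _ = g n - g 0 := by simp [g, h, newtonTail_self, newtonTail_zero h]
    _ = charmatrix A * _ := by rw [Finset.mul_sum, sum_congr rfl hstep, sum_range_sub]

lemma newtonTail_sortedEigenvalues_nonneg {A : Matrix (Fin n) (Fin n) ℝ} (hA : A.IsHermitian)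
    (hA0 : ∀ i j, 0 ≤ A i j) {l : ℕ} (hl : l < n) (i j : Fin n) :
    0 ≤ newtonTail A (sortedEigenvalues hA) n (l + 1) i j := by
  have hchar : A.charpoly = nodal (range n) (sortedEigenvalues hA) := by
    simpa using charpoly_eq_nodal_sortedEigenvalues hA
  have hmem := adjugate_charmatrix_mem_newtonCone hA hA0 (lam := sortedEigenvalues hA)
    (fun i j hij hj ↦ sortedEigenvalues_antitoneOn hA (by simpa using hij.trans_lt hj)
      (by simpa using hj) hij) i j
  rw [adjugate_charmatrix_eq_sum_newtonTail hchar, Matrix.sum_apply] at hmem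
  refine nonneg_of_sum_C_mul_nodal_mem_newtonCone (lam := sortedEigenvalues hA) (m := n) ?_ hl
    (a := fun l ↦ newtonTail A (sortedEigenvalues hA) n (l + 1) i j)
  simpa [mul_comm] using hmem

end MicchelliWilloughby

section MicchelliWilloughbySpectrum

open Polynomial Matrix Lagrange Finset Topology

variable {ι : Type*} [Fintype ι] [DecidableEq ι] {n : ℕ} {A M : Matrix ι ι ℝ} {lam : ℕ → ℝ}

/-- The conclusion of the Micchelli–Willoughby theorem: `lam` lists the `n` eigenvalues of `A` in
decreasing order, and the products of the factors `A - lam k` over the smallest eigenvalues are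
entrywise nonnegative. In contrast to symmetry, this property survives the passage to limits of
reversible matrices. -/
structure IsMicchelliWilloughby (A : Matrix ι ι ℝ) (n : ℕ) (lam : ℕ → ℝ) : Prop where
  antitoneOn : AntitoneOn lam (Set.Iio n)
  charpoly_eq : A.charpoly = nodal (range n) lam
  newtonTail_nonneg : ∀ l < n, ∀ i j, 0 ≤ newtonTail A lam n (l + 1) i j

lemma isMicchelliWilloughby_sortedEigenvalues {A : Matrix (Fin n) (Fin n) ℝ} (hA : A.IsHermitian)
    (hA0 : ∀ i j, 0 ≤ A i j) : IsMicchelliWilloughby A n (sortedEigenvalues hA) where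
  antitoneOn := by simpa using sortedEigenvalues_antitoneOn hA
  charpoly_eq := by simpa using charpoly_eq_nodal_sortedEigenvalues hA
  newtonTail_nonneg _ hl := newtonTail_sortedEigenvalues_nonneg hA hA0 hl

lemma aeval_units_conj {R S : Type*} [CommRing R] [Ring S] [Algebra R S] (u : Sˣ) (x : S)
    (p : R[X]) : aeval (↑u * x * ↑u⁻¹) p = ↑u * aeval x p * ↑u⁻¹ :=
  aeval_algHom_apply (MulSemiringAction.toAlgHom R S (ConjAct.toConjAct u)) x p

lemma mul_apply_nonneg {R κ μ ν : Type*} [Semiring R] [PartialOrder R] [IsOrderedRing R] [Fintype μ]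
    {A : Matrix κ μ R} {B : Matrix μ ν R} (hA : ∀ i j, 0 ≤ A i j) (hB : ∀ i j, 0 ≤ B i j)
    (i : κ) (j : ν) : 0 ≤ (A * B) i j :=
  sum_nonneg fun k _ ↦ mul_nonneg (hA i k) (hB k j)

lemma IsMicchelliWilloughby.units_conj (hA : IsMicchelliWilloughby A n lam) {D : (Matrix ι ι ℝ)ˣ}
    (hD : ∀ i j, 0 ≤ D.val i j) (hD' : ∀ i j, 0 ≤ D⁻¹.val i j) :
    IsMicchelliWilloughby (D.val * A * D⁻¹.val) n lam where
  antitoneOn := hA.antitoneOn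
  charpoly_eq := by rw [← hA.charpoly_eq, ← charpoly_units_conj D A, coe_units_inv]
  newtonTail_nonneg l hl := by
    rw [newtonTail, aeval_units_conj]
    exact mul_apply_nonneg (mul_apply_nonneg hD (hA.newtonTail_nonneg l hl)) hD'

lemma isRoot_nodal_iff {κ R : Type*} [CommRing R] [IsDomain R] {s : Finset κ} {v : κ → R} {x : R} :
    (nodal s v).IsRoot x ↔ ∃ i ∈ s, x = v i := by
  simp [IsRoot, eval_nodal, prod_eq_zero_iff, sub_eq_zero]

lemma abs_le_one_of_isRoot_charpoly (hM : M ∈ rowStochastic ℝ ι) {μ : ℝ}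
    (hμ : M.charpoly.IsRoot μ) : |μ| ≤ 1 := by
  rw [← charpoly_toLin', ← Module.End.hasEigenvalue_iff_isRoot_charpoly] at hμ
  obtain ⟨k, hk⟩ := eigenvalue_mem_ball hμ
  have hsum : ∑ j ∈ univ.erase k, ‖M k j‖ = 1 - M k k := by
    rw [eq_sub_iff_add_eq, ← sum_row_of_mem_rowStochastic hM k, ← sum_erase_add _ _ (mem_univ k)]
    simp_rw [Real.norm_of_nonneg (nonneg_of_mem_rowStochastic hM)]
  rw [Metric.mem_closedBall, Real.dist_eq, hsum] at hk
  have := nonneg_of_mem_rowStochastic hM (i := k) (j := k)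
  rw [abs_le] at hk ⊢
  constructor <;> linarith

lemma exists_units_conj_isHermitian_of_reversible {p : ι → ℝ} (hp : ∀ i, 0 < p i)
    (hrev : ∀ i j, p i * M i j = p j * M j i) :
    ∃ D : (Matrix ι ι ℝ)ˣ, (∀ i j, 0 ≤ D.val i j) ∧ (∀ i j, 0 ≤ D⁻¹.val i j) ∧
      (D⁻¹.val * M * D.val).IsHermitian := by
  have hsqrt (i : ι) : 0 < √(p i) := Real.sqrt_pos.2 (hp i)
  have hdiag {d : ι → ℝ} (hd : ∀ i, 0 ≤ d i) (i j) : 0 ≤ diagonal d i j := by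
    rw [diagonal_apply]
    split_ifs <;> simp [hd]
  let D : (Matrix ι ι ℝ)ˣ :=
    ⟨diagonal fun i ↦ (√(p i))⁻¹, diagonal fun i ↦ √(p i), by simp [(hsqrt _).ne'],
      by simp [(hsqrt _).ne']⟩
  refine ⟨D, hdiag fun i ↦ (inv_pos.2 (hsqrt i)).le, hdiag fun i ↦ (hsqrt i).le, ?_⟩
  have happly (i j) : (D⁻¹.val * M * D.val) i j = √(p i) * M i j / √(p j) := by
    simp [D, Units.inv_mk, mul_diagonal, diagonal_mul, div_eq_mul_inv]
  ext i j
  rw [conjTranspose_apply, star_trivial, happly, happly, div_eq_div_iff (hsqrt i).ne' (hsqrt j).ne']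
  linear_combination M j i * Real.mul_self_sqrt (hp j).le -
    M i j * Real.mul_self_sqrt (hp i).le - hrev i j

lemma exists_isMicchelliWilloughby_of_reversible {M : Matrix (Fin n) (Fin n) ℝ}
    (hM : M ∈ rowStochastic ℝ (Fin n)) {p : Fin n → ℝ} (hp : ∀ i, 0 < p i)
    (hrev : ∀ i j, p i * M i j = p j * M j i) :
    ∃ lam : ℕ → ℝ, (∀ k, lam k ∈ Set.Icc (-1 : ℝ) 1) ∧ IsMicchelliWilloughby M n lam := by
  obtain ⟨D, hD, hD', hA⟩ := exists_units_conj_isHermitian_of_reversible hp hrev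
  have hM_eq : D.val * (D⁻¹.val * M * D.val) * D⁻¹.val = M := by
    rw [mul_assoc D⁻¹.val, Units.mul_inv_cancel_left, Units.mul_inv_cancel_right]
  have hMW : IsMicchelliWilloughby M n (sortedEigenvalues hA) := by
    nth_rewrite 1 [← hM_eq]
    exact (isMicchelliWilloughby_sortedEigenvalues hA <| mul_apply_nonneg
      (mul_apply_nonneg hD' fun _ _ ↦ nonneg_of_mem_rowStochastic hM) hD).units_conj hD hD'
  refine ⟨_, fun k ↦ abs_le.1 ?_, hMW⟩
  by_cases hk : k < n
  · refine abs_le_one_of_isRoot_charpoly hM ?_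
    rw [hMW.charpoly_eq]
    exact isRoot_nodal_iff.2 ⟨k, mem_range.2 hk, rfl⟩
  · simp [sortedEigenvalues, hk]

lemma continuous_aeval_nodal {κ R S : Type*} [CommRing R] [Ring S] [Algebra R S]
    [TopologicalSpace R] [TopologicalSpace S] [IsTopologicalRing S] [ContinuousSMul R S]
    (s : Finset κ) : Continuous fun q : (κ → R) × S ↦ aeval q.2 (nodal s q.1) := by
  classical
  induction s using Finset.induction_on with
  | empty => simpa using continuous_const
  | insert a s ha ih =>
    simp only [nodal_eq, prod_insert ha, map_mul] at ih ⊢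
    simp only [map_sub, aeval_X, aeval_C, Algebra.algebraMap_eq_smul_one]
    fun_prop

lemma isClosed_setOf_isMicchelliWilloughby (n : ℕ) :
    IsClosed {q : (ℕ → ℝ) × Matrix ι ι ℝ | IsMicchelliWilloughby q.2 n q.1} := by
  have hset : {q : (ℕ → ℝ) × Matrix ι ι ℝ | IsMicchelliWilloughby q.2 n q.1} =
      {q | ∀ i ∈ Set.Iio n, ∀ j ∈ Set.Iio n, i ≤ j → q.1 j ≤ q.1 i} ∩
      {q | ∀ x : ℝ, (scalar ι x - q.2).det = ∏ k ∈ range n, (x - q.1 k)} ∩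
      {q | ∀ l < n, ∀ i j, 0 ≤ newtonTail q.2 q.1 n (l + 1) i j} := by
    ext q
    have hchar : q.2.charpoly = nodal (range n) q.1 ↔
        ∀ x : ℝ, (scalar ι x - q.2).det = ∏ k ∈ range n, (x - q.1 k) := by
      simp_rw [← eval_charpoly, ← eval_nodal]
      exact ⟨fun h x ↦ by rw [h], Polynomial.funext⟩
    exact ⟨fun h ↦ ⟨⟨h.1, hchar.1 h.2⟩, h.3⟩, fun h ↦ ⟨h.1.1, hchar.2 h.1.2, h.2⟩⟩
  rw [hset]
  simp only [Set.ofPred_forall]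
  refine (IsClosed.inter ?_ ?_).inter ?_
  · exact isClosed_biInter fun i _ ↦ isClosed_biInter fun j _ ↦ isClosed_iInter fun _ ↦
      isClosed_le (by fun_prop) (by fun_prop)
  · exact isClosed_iInter fun x ↦ isClosed_eq (by fun_prop) (by fun_prop)
  · exact isClosed_biInter fun l _ ↦ isClosed_iInter fun i ↦ isClosed_iInter fun j ↦
      isClosed_le continuous_const ((continuous_aeval_nodal _).matrix_elem i j)

lemma isClosed_rowStochastic : IsClosed (rowStochastic ℝ ι : Set (Matrix ι ι ℝ)) := by
  have hset : (rowStochastic ℝ ι : Set (Matrix ι ι ℝ)) =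
      {M | ∀ i j, 0 ≤ M i j} ∩ {M | ∀ i, ∑ j, M i j = 1} := by
    ext M
    exact mem_rowStochastic_iff_sum
  rw [hset]
  simp only [Set.ofPred_forall]
  exact (isClosed_iInter fun i ↦ isClosed_iInter fun j ↦ isClosed_le (by fun_prop)
    (by fun_prop)).inter (isClosed_iInter fun i ↦ isClosed_eq (by fun_prop) (by fun_prop))

lemma revClosure_subset_rowStochastic (n : ℕ) :
    RevClosure n ⊆ (rowStochastic ℝ (Fin n) : Set (Matrix (Fin n) (Fin n) ℝ)) :=
  closure_minimal (fun _ h ↦ mem_rowStochastic_iff_sum.2 ⟨h.1, h.2.1⟩) isClosed_rowStochastic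

lemma exists_isMicchelliWilloughby_of_mem_revClosure {P : Matrix (Fin n) (Fin n) ℝ}
    (hP : P ∈ RevClosure n) : ∃ lam, IsMicchelliWilloughby P n lam := by
  let F : Set ((ℕ → Set.Icc (-1 : ℝ) 1) × Matrix (Fin n) (Fin n) ℝ) :=
    {q | IsMicchelliWilloughby q.2 n fun k ↦ q.1 k}
  have hF : IsClosed F := (isClosed_setOf_isMicchelliWilloughby n).preimage
    (f := fun q : (ℕ → Set.Icc (-1 : ℝ) 1) × Matrix (Fin n) (Fin n) ℝ ↦
      ((fun k ↦ (q.1 k : ℝ)), q.2)) (by fun_prop)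
  have hsub : RevClosure n ⊆ Prod.snd '' F := by
    refine closure_minimal ?_ (isClosedMap_snd_of_compactSpace F hF)
    rintro M ⟨h0, h1, p, hp, -, hrev⟩
    obtain ⟨lam, hlam, hM⟩ := exists_isMicchelliWilloughby_of_reversible
      (mem_rowStochastic_iff_sum.2 ⟨h0, h1⟩) hp hrev
    exact ⟨(fun k ↦ ⟨lam k, hlam k⟩, M), hM, rfl⟩
  obtain ⟨⟨lam, P⟩, hMW, rfl⟩ := hsub hP
  exact ⟨_, hMW⟩

lemma sq_mem_revClosure {P : Matrix (Fin n) (Fin n) ℝ} (hP : P ∈ RevClosure n) :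
    P ^ 2 ∈ RevClosure n := by
  refine map_mem_closure (f := (· ^ 2)) (by fun_prop) hP ?_
  rintro M ⟨h0, h1, p, hp, hp1, hrev⟩
  have hM2 := mem_rowStochastic_iff_sum.1 (pow_mem (mem_rowStochastic_iff_sum.2 ⟨h0, h1⟩) 2)
  refine ⟨hM2.1, hM2.2, p, hp, hp1, fun i j ↦ ?_⟩
  simp only [sq, mul_apply, Finset.mul_sum]
  refine sum_congr rfl fun k _ ↦ ?_
  linear_combination M k j * hrev i k + M k i * hrev k j

end MicchelliWilloughbySpectrum

section Equilibrium

open Polynomial Matrix Lagrange Finset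

variable {ι : Type*} [Fintype ι] [DecidableEq ι] {n : ℕ}

lemma charpoly_sq_eq_prod {R : Type*} [CommRing R] [IsDomain R] [Infinite R] {A : Matrix ι ι R}
    {β : ι → R} (h : A.charpoly = ∏ j, (X - C (β j))) :
    (A ^ 2).charpoly = ∏ j, (X - C (β j ^ 2)) := by
  refine expand_injective two_pos (Polynomial.funext fun x ↦ ?_)
  have hdet (t : R) : (scalar ι t - A).det = ∏ j, (t - β j) := by
    rw [← eval_charpoly, h, eval_prod]
    simp
  have hfactor : scalar ι (x ^ 2) - A ^ 2 = -((scalar ι x - A) * (scalar ι (-x) - A)) := by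
    have hcomm : A * scalar ι x = scalar ι x * A := (scalar_commute x (mul_comm _) A).symm
    rw [map_pow, map_neg, sub_mul, mul_sub, mul_sub, mul_neg, mul_neg, hcomm, sq, sq]
    abel
  rw [expand_eval, expand_eval, eval_charpoly, hfactor, det_neg, det_mul, hdet, hdet, eval_prod,
    ← prod_mul_distrib, ← card_univ, ← prod_const, ← prod_mul_distrib]
  refine prod_congr rfl fun j _ ↦ ?_
  simp only [eval_sub, eval_X, eval_C]
  ring

lemma nodal_range_succ' {R : Type*} [CommRing R] (lam : ℕ → R) (l : ℕ) :
    nodal (range (l + 1)) lam = (X - C (lam 0)) * nodal (range l) fun k ↦ lam (k + 1) := by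
  rw [nodal_eq, prod_range_succ', mul_comm, nodal_eq]

lemma head_eq_and_nodal_tail_eq_of_antitoneOn {R : Type*} [CommRing R] [IsDomain R] [PartialOrder R]
    {lam : ℕ → R} (hanti : AntitoneOn lam (Set.Iio (n + 1))) {c : R} {q : R[X]}
    (h : nodal (range (n + 1)) lam = (X - C c) * q) (hq : ∀ x, q.IsRoot x → x ≤ c) :
    lam 0 = c ∧ nodal (range n) (fun k ↦ lam (k + 1)) = q := by
  have hroot (x : R) : (∃ i ∈ range (n + 1), x = lam i) ↔ x = c ∨ q.IsRoot x := by
    rw [← isRoot_nodal_iff, h, root_mul, root_X_sub_C, eq_comm]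
  have h0 : lam 0 = c := by
    obtain ⟨i, hi, rfl⟩ := (hroot c).2 (.inl rfl)
    refine le_antisymm ?_ (hanti (Set.mem_Iio.2 n.succ_pos) (mem_range.1 hi) (Nat.zero_le i))
    exact ((hroot (lam 0)).1 ⟨0, by simp, rfl⟩).elim le_of_eq (hq _)
  refine ⟨h0, mul_left_cancel₀ (X_sub_C_ne_zero c) ?_⟩
  rw [← h, ← h0, nodal_range_succ']

lemma eq_of_mulVec_eq_self {K : Type*} [Field K] {M : Matrix ι ι K} (hM : M *ᵥ 1 = 1)
    (hsimple : M.charpoly.rootMultiplicity 1 ≤ 1) {v : ι → K} (hv : M *ᵥ v = v) (i j : ι) :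
    v i = v j := by
  obtain ⟨u, hu⟩ := finrank_le_one_iff.1 ((LinearMap.finrank_eigenspace_le (toLin' M) 1).trans
    (by rwa [charpoly_toLin']))
  have hmultiple {w : ι → K} (hw : M *ᵥ w = w) : ∃ c : K, c • u.1 = w := by
    obtain ⟨c, hc⟩ := hu ⟨w, Module.End.mem_eigenspace_iff.2 (by simpa using hw)⟩
    exact ⟨c, congrArg Subtype.val hc⟩
  obtain ⟨c, hc⟩ := hmultiple hM
  obtain ⟨d, rfl⟩ := hmultiple hv
  have hcu (k : ι) : c * u.1 k = 1 := congrFun hc k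
  have hc0 : c ≠ 0 := left_ne_zero_of_mul_eq_one (hcu i)
  rw [Pi.smul_apply, Pi.smul_apply, mul_left_cancel₀ hc0 ((hcu i).trans (hcu j).symm)]

lemma vecMul_aeval {R : Type*} [CommRing R] {M : Matrix ι ι R} {v : ι → R} {μ : R}
    (hv : v ᵥ* M = μ • v) (p : R[X]) : v ᵥ* aeval M p = p.eval μ • v := by
  induction p using Polynomial.induction_on' with
  | add p q hp hq => rw [map_add, vecMul_add, hp, hq, eval_add, add_smul]
  | monomial k a =>
    have hpow : v ᵥ* M ^ k = μ ^ k • v := by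
      induction k with
      | zero => simp
      | succ k ih => rw [pow_succ, ← vecMul_vecMul, ih, smul_vecMul, hv, smul_smul, pow_succ]
    rw [aeval_monomial, ← Algebra.smul_def, vecMul_smul, hpow, smul_smul, eval_monomial]

variable {K : Type*} [Field K] {M : Matrix ι ι K} {lam : ℕ → K}

lemma mul_newtonTail_one (hchar : M.charpoly = nodal (range (n + 1)) lam) (h0 : lam 0 = 1) :
    M * newtonTail M lam (n + 1) 1 = newtonTail M lam (n + 1) 1 := by
  have h := newtonTail_eq_mul_sub (A := M) (lam := lam) n.succ_pos
  rw [newtonTail_zero hchar, h0, one_smul, zero_add] at h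
  exact sub_eq_zero.1 h.symm

lemma newtonTail_one_apply (hM : M *ᵥ 1 = 1) (hchar : M.charpoly = nodal (range (n + 1)) lam)
    (h0 : lam 0 = 1) (hlam : ∀ k < n, lam (k + 1) ≠ 1) {π : ι → K} (hπ : π ᵥ* M = π)
    (hπ1 : ∑ i, π i = 1) (i j : ι) :
    newtonTail M lam (n + 1) 1 i j = (∏ k ∈ range n, (1 - lam (k + 1))) * π j := by
  have hsimple : M.charpoly.rootMultiplicity 1 ≤ 1 := by
    have hroot : ¬(nodal (range n) fun k ↦ lam (k + 1)).IsRoot 1 := by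
      rw [isRoot_nodal_iff]
      rintro ⟨k, hk, hk1⟩
      exact hlam k (mem_range.1 hk) hk1.symm
    rw [hchar, nodal_range_succ', h0,
      rootMultiplicity_mul (mul_ne_zero (X_sub_C_ne_zero 1) nodal_ne_zero),
      rootMultiplicity_X_sub_C_self, rootMultiplicity_eq_zero hroot]
  have hconst (k : ι) : newtonTail M lam (n + 1) 1 k j = newtonTail M lam (n + 1) 1 i j :=
    eq_of_mulVec_eq_self hM hsimple (v := fun k ↦ newtonTail M lam (n + 1) 1 k j)
      (funext fun k ↦ congrFun₂ (mul_newtonTail_one hchar h0) k j) k i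
  have hvec := congrFun (vecMul_aeval (M := M) (v := π) (μ := 1) (by rwa [one_smul])
    (nodal (Ico 1 (n + 1)) lam)) j
  rw [← newtonTail, vecMul, dotProduct, Pi.smul_apply, smul_eq_mul, eval_nodal,
    prod_Ico_eq_prod_range] at hvec
  simpa [hconst, ← sum_mul, hπ1, add_comm 1] using hvec

end Equilibrium

section PureDeath

open Polynomial Matrix Lagrange Finset

variable {ι : Type*} [Fintype ι] [DecidableEq ι] {n : ℕ} {M : Matrix ι ι ℝ} {lam : ℕ → ℝ}

/-- The probability that the pure death chain started at `m`, which steps from `k + 1` to `k` with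
probability `1 - lam (k + 1)` and is otherwise at rest, has not reached `0` by time `t`. -/
def survivalProb (lam : ℕ → ℝ) : ℕ → ℕ → ℝ
  | _, 0 => 0
  | 0, _ + 1 => 1
  | t + 1, m + 1 =>
    (1 - lam (m + 1)) * survivalProb lam t m + lam (m + 1) * survivalProb lam t (m + 1)

lemma one_sub_survivalProb_mul_newtonTail_le (hMW : IsMicchelliWilloughby M (n + 1) lam)
    (h0 : lam 0 = 1) (hlam : ∀ k < n, lam (k + 1) ∈ Set.Icc 0 1) (t : ℕ) {m : ℕ} (hm : m ≤ n)
    (i j : ι) :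
    (1 - survivalProb lam t m) * newtonTail M lam (n + 1) 1 i j ≤
      (∏ k ∈ range m, (1 - lam (k + 1))) * (M ^ t * newtonTail M lam (n + 1) (m + 1)) i j := by
  induction t generalizing m with
  | zero =>
    rcases m with _ | m
    · simp [survivalProb]
    · have hprod : 0 ≤ ∏ k ∈ range (m + 1), (1 - lam (k + 1)) :=
        prod_nonneg fun k hk ↦ sub_nonneg.2 (hlam k (by grind)).2
      simpa [survivalProb] using mul_nonneg hprod (hMW.newtonTail_nonneg (m + 1) (by omega) i j)
  | succ t ih =>
    rcases m with _ | m
    · rw [pow_succ, mul_assoc, mul_newtonTail_one hMW.charpoly_eq h0]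
      simpa [survivalProb] using ih hm
    · obtain ⟨hl0, hl1⟩ := hlam m hm
      have hstep : M * newtonTail M lam (n + 1) (m + 1 + 1) = newtonTail M lam (n + 1) (m + 1) +
          lam (m + 1) • newtonTail M lam (n + 1) (m + 1 + 1) := by
        rw [newtonTail_eq_mul_sub (show m + 1 < n + 1 by omega), sub_add_cancel]
      have hdie := mul_le_mul_of_nonneg_left (ih (m := m) (by omega)) (sub_nonneg.2 hl1)
      have hrest := mul_le_mul_of_nonneg_left (ih hm) hl0
      rw [pow_succ, mul_assoc, hstep, mul_add, mul_smul_comm, Matrix.add_apply,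
        Matrix.smul_apply, smul_eq_mul, survivalProb]
      rw [prod_range_succ] at hrest ⊢
      linear_combination hdie + hrest

lemma one_sub_survivalProb_mul_le_pow_apply (hMW : IsMicchelliWilloughby M (n + 1) lam)
    (hM : M *ᵥ 1 = 1) (h0 : lam 0 = 1) (hlam : ∀ k < n, lam (k + 1) ∈ Set.Ico 0 1)
    {π : ι → ℝ} (hπ : π ᵥ* M = π) (hπ1 : ∑ i, π i = 1) (t : ℕ) (i j : ι) :
    (1 - survivalProb lam t n) * π j ≤ (M ^ t) i j := by
  have hprod : 0 < ∏ k ∈ range n, (1 - lam (k + 1)) :=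
    prod_pos fun k hk ↦ sub_pos.2 (hlam k (mem_range.1 hk)).2
  have h := one_sub_survivalProb_mul_newtonTail_le hMW h0
    (fun k hk ↦ Set.Ico_subset_Icc_self (hlam k hk)) t le_rfl i j
  rw [newtonTail_self, mul_one, newtonTail_one_apply hM hMW.charpoly_eq h0
    (fun k hk ↦ (hlam k hk).2.ne) hπ hπ1, mul_left_comm] at h
  exact le_of_mul_le_mul_left h hprod

lemma survivalProb_succ_le {r θ : ℝ} (hr : r ≤ 1) (hθ0 : 0 < θ) (hθ1 : θ ≤ 1) (t : ℕ) {m : ℕ}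
    (hlam : ∀ k ≤ m, lam (k + 1) ∈ Set.Icc 0 r) :
    survivalProb lam t (m + 1) ≤ (1 - (1 - r) * (1 - θ)) ^ t * θ⁻¹ ^ m := by
  -- `ρ` is the mean of `θ ^ (number of steps)` for a single attempted step of probability `1 - r`.
  set ρ := 1 - (1 - r) * (1 - θ)
  have hrρ : r ≤ ρ := by nlinarith
  have hρ0 : 0 ≤ ρ := ((hlam 0 m.zero_le).1.trans (hlam 0 m.zero_le).2).trans hrρ
  induction t generalizing m with
  | zero => simpa [survivalProb] using one_le_pow₀ ((one_le_inv₀ hθ0).2 hθ1)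
  | succ t ih =>
    obtain ⟨hl0, hlr⟩ := hlam m le_rfl
    have hrest := mul_le_mul_of_nonneg_left (ih hlam) hl0
    rcases m with _ | m
    · calc survivalProb lam (t + 1) (0 + 1)
          ≤ lam (0 + 1) * (ρ ^ t * θ⁻¹ ^ 0) := by simpa [survivalProb] using hrest
        _ ≤ ρ * (ρ ^ t * θ⁻¹ ^ 0) := mul_le_mul_of_nonneg_right (hlr.trans hrρ) (by positivity)
        _ = ρ ^ (t + 1) * θ⁻¹ ^ 0 := by ring
    · have hdie := mul_le_mul_of_nonneg_left (ih fun k hk ↦ hlam k (hk.trans m.le_succ))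
        (sub_nonneg.2 (hlr.trans hr))
      have hmoment : (1 - lam (m + 1 + 1)) * θ + lam (m + 1 + 1) ≤ ρ := by nlinarith
      calc survivalProb lam (t + 1) (m + 1 + 1)
          ≤ (1 - lam (m + 1 + 1)) * (ρ ^ t * θ⁻¹ ^ m) +
              lam (m + 1 + 1) * (ρ ^ t * θ⁻¹ ^ (m + 1)) := add_le_add hdie hrest
        _ = ((1 - lam (m + 1 + 1)) * θ + lam (m + 1 + 1)) * (ρ ^ t * θ⁻¹ ^ (m + 1)) := by
          rw [pow_succ]
          field_simp
        _ ≤ ρ * (ρ ^ t * θ⁻¹ ^ (m + 1)) := mul_le_mul_of_nonneg_right hmoment (by positivity)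
        _ = ρ ^ (t + 1) * θ⁻¹ ^ (m + 1) := by ring

end PureDeath

section Chernoff

lemma exp_neg_le_one_sub_add_sq_div_two {s : ℝ} (hs : 0 ≤ s) :
    Real.exp (-s) ≤ 1 - s + s ^ 2 / 2 := by
  have hpos : 0 < 1 - s + s ^ 2 / 2 := by nlinarith [sq_nonneg (s - 1)]
  rw [Real.exp_neg, inv_le_iff_one_le_mul₀' (Real.exp_pos s)]
  calc (1 : ℝ) ≤ (1 + s + s ^ 2 / 2) * (1 - s + s ^ 2 / 2) := by nlinarith [sq_nonneg (s ^ 2)]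
    _ ≤ Real.exp s * (1 - s + s ^ 2 / 2) :=
      mul_le_mul_of_nonneg_right (Real.quadratic_le_exp_of_nonneg hs) hpos.le

lemma exists_pow_mul_inv_pow_le_exp {g : ℝ} {n t : ℕ} (hg : g ≤ 1) (hμ : 0 < g * t)
    (hn : n ≤ g * t) :
    ∃ θ ∈ Set.Ioc (0 : ℝ) 1, (1 - g * (1 - θ)) ^ t * θ⁻¹ ^ n ≤
      Real.exp (-((g * t - n) ^ 2 / (2 * (g * t)))) := by
  set s := (g * t - n) / (g * t) with hs
  have hs0 : 0 ≤ s := div_nonneg (sub_nonneg.2 hn) hμ.le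
  have hθ1 : Real.exp (-s) ≤ 1 := Real.exp_le_one_iff.2 (neg_nonpos.2 hs0)
  refine ⟨Real.exp (-s), ⟨Real.exp_pos _, hθ1⟩, ?_⟩
  have hbase : 0 ≤ 1 - g * (1 - Real.exp (-s)) := by nlinarith [Real.exp_pos (-s)]
  calc (1 - g * (1 - Real.exp (-s))) ^ t * (Real.exp (-s))⁻¹ ^ n
      ≤ Real.exp (-(g * (1 - Real.exp (-s)))) ^ t * (Real.exp (-s))⁻¹ ^ n := by
        gcongr
        exact Real.one_sub_le_exp_neg _
    _ = Real.exp (g * t * (Real.exp (-s) - 1) + n * s) := by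
        rw [← Real.exp_neg, neg_neg, ← Real.exp_nat_mul, ← Real.exp_nat_mul, ← Real.exp_add]
        ring_nf
    _ ≤ Real.exp (g * t * (-s + s ^ 2 / 2) + n * s) := by
        gcongr
        linarith [exp_neg_le_one_sub_add_sq_div_two hs0]
    _ = Real.exp (-((g * t - n) ^ 2 / (2 * (g * t)))) := by
        rw [hs]
        congr 1
        have := hμ.ne'
        field_simp
        ring

lemma le_sq_sub_div_of_add_sqrt_le {a L μ : ℝ} (ha : 0 ≤ a) (hL : 0 < L)
    (h : a + 2 * L + √(2 * a * L) ≤ μ) : L ≤ (μ - a) ^ 2 / (2 * μ) := by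
  set q := √(2 * a * L)
  have hq0 : 0 ≤ q := Real.sqrt_nonneg _
  have hq : q ^ 2 = 2 * a * L := Real.sq_sqrt (by positivity)
  have hmul : q * q ≤ (μ - a) * (μ - a - 2 * L) :=
    mul_le_mul (by linarith) (by linarith) hq0 (by linarith)
  rw [le_div_iff₀ (by linarith)]
  linear_combination hmul - hq

lemma survivalProb_succ_le_exp {lam : ℕ → ℝ} {r L : ℝ} {n t : ℕ} (hr : r ≤ 1)
    (hlam : ∀ k ≤ n, lam (k + 1) ∈ Set.Icc 0 r) (hL : 0 < L)
    (ht : n + 2 * L + √(2 * n * L) ≤ (1 - r) * t) :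
    survivalProb lam t (n + 1) ≤ Real.exp (-L) := by
  have hsqrt := Real.sqrt_nonneg (2 * n * L)
  have hr0 : 0 ≤ r := (hlam 0 n.zero_le).1.trans (hlam 0 n.zero_le).2
  obtain ⟨θ, ⟨hθ0, hθ1⟩, hθ⟩ := exists_pow_mul_inv_pow_le_exp (g := 1 - r) (n := n) (t := t)
    (by linarith) (by linarith [n.cast_nonneg (α := ℝ)]) (by linarith)
  exact (survivalProb_succ_le hr hθ0 hθ1 t hlam).trans <| hθ.trans <|
    Real.exp_le_exp.2 (neg_le_neg (le_sq_sub_div_of_add_sqrt_le n.cast_nonneg hL ht))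

end Chernoff

section Mixing

open Polynomial Matrix Lagrange Finset

lemma one_sub_exp_neg_mul_le_pow_apply {n t : ℕ} {M : Matrix (Fin (n + 2)) (Fin (n + 2)) ℝ}
    (hM : M ∈ RevClosure (n + 2)) {q : ℝ[X]} (hchar : M.charpoly = (X - C 1) * q) {r L : ℝ}
    (hr : r < 1) (hq : ∀ x, q.IsRoot x → x ∈ Set.Icc 0 r) (hL : 0 < L)
    (ht : n + 2 * L + √(2 * n * L) ≤ (1 - r) * t) {π : Fin (n + 2) → ℝ} (hπ0 : ∀ j, 0 ≤ π j)
    (hπ1 : ∑ j, π j = 1) (hπ : π ᵥ* M = π) (i j : Fin (n + 2)) :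
    (1 - Real.exp (-L)) * π j ≤ (M ^ t) i j := by
  obtain ⟨lam, hMW⟩ := exists_isMicchelliWilloughby_of_mem_revClosure hM
  obtain ⟨h0, hnodal⟩ := head_eq_and_nodal_tail_eq_of_antitoneOn hMW.antitoneOn
    (hMW.charpoly_eq.symm.trans hchar) fun x hx ↦ (hq x hx).2.trans hr.le
  have hlam (k : ℕ) (hk : k ≤ n) : lam (k + 1) ∈ Set.Icc 0 r :=
    hq _ (hnodal ▸ isRoot_nodal_iff.2 ⟨k, by simpa [Nat.lt_succ_iff] using hk, rfl⟩)
  calc (1 - Real.exp (-L)) * π j ≤ (1 - survivalProb lam t (n + 1)) * π j :=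
        mul_le_mul_of_nonneg_right
          (sub_le_sub_left (survivalProb_succ_le_exp hr.le hlam hL ht) 1) (hπ0 j)
    _ ≤ (M ^ t) i j :=
        one_sub_survivalProb_mul_le_pow_apply hMW
          (one_vecMul_of_mem_rowStochastic (revClosure_subset_rowStochastic _ hM)) h0
          (fun k hk ↦ ⟨(hlam k (by omega)).1, (hlam k (by omega)).2.trans_lt hr⟩) hπ hπ1 t i j

lemma one_sub_exp_neg_mul_le_pow_two_mul_apply {n t : ℕ}
    {P : Matrix (Fin (n + 2)) (Fin (n + 2)) ℝ} (hP : P ∈ RevClosure (n + 2))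
    {β : Fin (n + 2) → ℝ} (hchar : P.charpoly = ∏ j, (X - C (β j)))
    (hlast : β (Fin.last (n + 1)) = 1) {r L : ℝ} (hβ : ∀ j : Fin (n + 1), |β j.castSucc| ≤ r)
    (hr : r < 1) (hL : 0 < L) (ht : n + 2 * L + √(2 * n * L) ≤ (1 - r) * t)
    {π : Fin (n + 2) → ℝ} (hπ0 : ∀ j, 0 ≤ π j) (hπ1 : ∑ j, π j = 1) (hπ : π ᵥ* P = π)
    (i j : Fin (n + 2)) : (1 - Real.exp (-L)) * π j ≤ (P ^ (2 * t)) i j := by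
  have hcharSq : (P ^ 2).charpoly =
      (X - C 1) * nodal univ fun j : Fin (n + 1) ↦ β j.castSucc ^ 2 := by
    rw [charpoly_sq_eq_prod hchar, Fin.prod_univ_castSucc, hlast, one_pow, mul_comm, nodal_eq]
  have hroot (x : ℝ) (hx : (nodal univ fun j : Fin (n + 1) ↦ β j.castSucc ^ 2).IsRoot x) :
      x ∈ Set.Icc 0 r := by
    obtain ⟨k, -, rfl⟩ := isRoot_nodal_iff.1 hx
    refine ⟨sq_nonneg _, ?_⟩
    rw [← sq_abs]
    exact (pow_le_of_le_one (abs_nonneg _) ((hβ k).trans hr.le) two_ne_zero).trans (hβ k)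
  rw [pow_mul]
  exact one_sub_exp_neg_mul_le_pow_apply (sq_mem_revClosure hP) hcharSq hr hroot hL ht hπ0 hπ1
    (by rw [sq, ← vecMul_vecMul, hπ, hπ]) i j

lemma half_sum_abs_sub_le {ι : Type*} [Fintype ι] {μ ν : ι → ℝ} {δ : ℝ} (hδ : 0 ≤ δ)
    (hν0 : ∀ i, 0 ≤ ν i) (hμ : ∑ i, μ i = 1) (hν : ∑ i, ν i = 1)
    (h : ∀ i, (1 - δ) * ν i ≤ μ i) : (1 / 2) * ∑ i, |μ i - ν i| ≤ δ := by
  have hle (i : ι) : |μ i - ν i| ≤ μ i - ν i + 2 * δ * ν i := by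
    have := mul_nonneg hδ (hν0 i)
    exact abs_le.2 ⟨by linarith [h i], by linarith⟩
  have hsum := Finset.sum_le_sum fun i (_ : i ∈ univ) ↦ hle i
  rw [sum_add_distrib, sum_sub_distrib, ← Finset.mul_sum, hμ, hν] at hsum
  linarith

end Mixing

/-- Theorem 1.3 of the paper (general reversible case, eigenvalues may be negative):
for reversible `P` on `N` states with absolute spectral gap `1 - βs > 0`,
`t_mix(ε) ≤ 2 (N + 2 log ε⁻¹ - 1 + √(2(N-2) log ε⁻¹)) · t_rel`. -/
theorem mixing_time_reversible (N : ℕ) (hN : 2 ≤ N)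
    (P : Matrix (Fin N) (Fin N) ℝ) (hPcl : P ∈ RevClosure N)
    (piv : Fin N → ℝ) (hpiv0 : ∀ i, 0 ≤ piv i) (hpiv1 : ∑ i, piv i = 1)
    (hstat : ∀ j, ∑ i, piv i * P i j = piv j)
    (hrev : ∀ i j, piv i * P i j = piv j * P j i)
    (β : Fin N → ℝ)
    (hchar : P.charpoly = ∏ j, (Polynomial.X - Polynomial.C (β j)))
    (hβlast : ∀ j : Fin N, (j : ℕ) = N - 1 → β j = 1)
    (βs : ℝ) (hβ : ∀ j : Fin N, (j : ℕ) < N - 1 → |β j| ≤ βs)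
    (hβs0 : 0 ≤ βs) (hβs1 : βs < 1)
    (ε : ℝ) (hε0 : 0 < ε) (hε1 : ε < 1) :
    ((sInf {t : ℕ | ∀ x, (1 / 2) * ∑ y, |(P ^ t) x y - piv y| ≤ ε} : ℕ) : ℝ) ≤
      2 * ((N : ℝ) + 2 * Real.log ε⁻¹ - 1
          + Real.sqrt (2 * ((N - 2 : ℕ) : ℝ) * Real.log ε⁻¹)) * (1 / (1 - βs)) := by
  obtain ⟨n, rfl⟩ := Nat.exists_eq_add_of_le' hN
  have hgap : 0 < 1 - βs := sub_pos.2 hβs1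
  have hL : 0 < Real.log ε⁻¹ := Real.log_pos ((one_lt_inv₀ hε0).2 hε1)
  have hexp : Real.exp (-Real.log ε⁻¹) = ε := by rw [Real.log_inv, neg_neg, Real.exp_log hε0]
  set s := (n : ℝ) + 2 * Real.log ε⁻¹ + √(2 * n * Real.log ε⁻¹) with hs
  set t := ⌈s / (1 - βs)⌉₊
  have hst : s ≤ (1 - βs) * t := (div_le_iff₀' hgap).1 (Nat.le_ceil _)
  have hsep := one_sub_exp_neg_mul_le_pow_two_mul_apply hPcl hchar (hβlast _ (by simp))
    (fun j ↦ hβ _ (by rw [Fin.val_castSucc]; omega)) hβs1 hL hst hpiv0 hpiv1 (funext hstat)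
  have hmix : 2 * t ∈ {t : ℕ | ∀ x, (1 / 2) * ∑ y, |(P ^ t) x y - piv y| ≤ ε} := fun i ↦
    half_sum_abs_sub_le hε0.le hpiv0 (Matrix.sum_row_of_mem_rowStochastic
      (pow_mem (revClosure_subset_rowStochastic _ hPcl) _) i) hpiv1 fun j ↦ hexp ▸ hsep i j
  calc ((sInf {t : ℕ | ∀ x, (1 / 2) * ∑ y, |(P ^ t) x y - piv y| ≤ ε} : ℕ) : ℝ)
      ≤ ((2 * t : ℕ) : ℝ) := Nat.cast_le.2 (Nat.sInf_le hmix)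
    _ ≤ 2 * (s / (1 - βs) + 1 / (1 - βs)) := by
      have hceil : (t : ℝ) < s / (1 - βs) + 1 := Nat.ceil_lt_add_one (by positivity)
      have hone : 1 ≤ 1 / (1 - βs) := (one_le_div hgap).2 (by linarith)
      push_cast
      linarith
    _ = _ := by
      rw [hs, Nat.add_sub_cancel]
      push_cast
      ring
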